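/- Let C be a triangulated category, B a weakly negative set of objects of C, and 𝔻 the triangulated subcategory of C generated by B. Let n be an integer, X an object of C with Hom(X, Z') = 0 for all Z' ∈ B_{≥1}, Y an object of C with Hom(Z', Y) = 0 for all Z' ∈ B_{≤ n−2}, and let e : X → Y in C/𝔻 be presented as h ∘ q⁻¹ with h ∈ C(Z, Y), q ∈ C(Z, X) and Cone(q) ∈ B_{[n,0]}. Then e = 0 in C/𝔻 if and only if h factors in C through an element of B_{[n−1,0]}. -/

import Mathlib

open CategoryTheory Limits Pretriangulated ZeroObject

universe v u v' u'

section TriangulatedPrelude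

variable {C : Type u} [Category.{v} C] [HasZeroObject C] [HasShift C ℤ] [Preadditive C]
  [∀ n : ℤ, (shiftFunctor C n).Additive] [Pretriangulated C]

/-- The objects of the smallest strict full triangulated subcategory of `C`
containing the set of objects `B`. -/
inductive genSub (B : Set C) : C → Prop
  | of (X : C) (hX : X ∈ B) : genSub B X
  | zero (X : C) (hX : IsZero X) : genSub B X
  | shift (X : C) (n : ℤ) (hX : genSub B X) : genSub B (X⟦n⟧)
  | ext₂ (T : Triangle C) (hT : T ∈ distTriang C) (h₁ : genSub B T.obj₁)
      (h₃ : genSub B T.obj₃) : genSub B T.obj₂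

/-- The triangulated subcategory of `C` generated by `B`. -/
def genSubcat (B : Set C) : ObjectProperty C :=
  genSub B

instance genSubcat_isTriangulated (B : Set C) : (genSubcat B).IsTriangulated where
  exists_zero := ⟨0, isZero_zero _, genSub.zero _ (isZero_zero _)⟩
  isStableUnderShiftBy n := ⟨fun X h => genSub.shift X n h⟩
  ext₂' T hT h₁ h₃ := ObjectProperty.le_isoClosure _ _ (genSub.ext₂ T hT h₁ h₃)

/-- The extension-closure of a class of objects `E`: the smallest class containing `E`
and `0` and such that for any distinguished triangle `X ⟶ Y ⟶ Z` with `X, Z` in the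
class, `Y` is also in the class. -/
inductive extClosure (E : Set C) : C → Prop
  | of (X : C) (hX : X ∈ E) : extClosure E X
  | zero (X : C) (hX : IsZero X) : extClosure E X
  | ext₂ (T : Triangle C) (hT : T ∈ distTriang C) (h₁ : extClosure E T.obj₁)
      (h₃ : extClosure E T.obj₃) : extClosure E T.obj₂

/-- `D_{[i,j]}`: the extension-closure of `∪_{i ≤ l ≤ j} D[l]`. -/
def shiftClosure (D : Set C) (i j : ℤ) : Set C :=
  extClosure {X | ∃ (Y : C) (l : ℤ), i ≤ l ∧ l ≤ j ∧ Y ∈ D ∧ X = Y⟦l⟧}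

/-- `D_{≥ i} = ∪_{k ≥ i} D_{[i,k]}`. -/
def shiftClosureGE (D : Set C) (i : ℤ) : Set C := {X | ∃ k, i ≤ k ∧ X ∈ shiftClosure D i k}

/-- `D_{≤ j} = ∪_{k ≤ j} D_{[k,j]}`. -/
def shiftClosureLE (D : Set C) (j : ℤ) : Set C := {X | ∃ k, k ≤ j ∧ X ∈ shiftClosure D k j}

/-- A set of objects `D` is weakly negative if `0 ∈ D` and `Hom(X, Y[i]) = 0`
for all `X, Y ∈ D` and all `i ≥ 2`. -/
def WeaklyNegative (D : Set C) : Prop :=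
  (0 : C) ∈ D ∧ ∀ X ∈ D, ∀ Y ∈ D, ∀ i : ℤ, 2 ≤ i → ∀ f : X ⟶ (Y⟦i⟧), f = 0

end TriangulatedPrelude

section Helpers

variable {C : Type u} [Category.{v} C] [HasZeroObject C] [HasShift C ℤ] [Preadditive C]
  [∀ n : ℤ, (shiftFunctor C n).Additive] [Pretriangulated C]

lemma extClosure_iso {E : Set C} {X Y : C} (e : X ≅ Y) (h : extClosure E X) :
    extClosure E Y := by
  have hT : Triangle.mk e.hom (0 : Y ⟶ (0 : C)) 0 ∈ distTriang C :=
    (Triangle.distinguished_iff_of_isZero₃ _ (isZero_zero _)).2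
      (inferInstanceAs (IsIso e.hom))
  exact extClosure.ext₂ (Triangle.mk e.hom (0 : Y ⟶ (0 : C)) 0) hT h
    (extClosure.zero _ (isZero_zero _))

lemma extClosure_mono {E F : Set C} (hEF : ∀ X ∈ E, extClosure F X) {X : C}
    (h : extClosure E X) : extClosure F X := by
  induction h with
  | of X hX => exact hEF X hX
  | zero X hX => exact .zero X hX
  | ext₂ T hT _ _ h₁ h₃ => exact .ext₂ T hT h₁ h₃

lemma shiftClosure_mono {D : Set C} {i j i' j' : ℤ} (hi : i' ≤ i) (hj : j ≤ j') {X : C}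
    (h : X ∈ shiftClosure D i j) : X ∈ shiftClosure D i' j' := by
  refine extClosure_mono (fun X hX => ?_) h
  obtain ⟨Y, l, h₁, h₂, hY, rfl⟩ := hX
  exact .of _ ⟨Y, l, by omega, by omega, hY, rfl⟩

lemma shiftClosure_shift {D : Set C} {i j : ℤ} (n : ℤ) {X : C}
    (h : X ∈ shiftClosure D i j) : X⟦n⟧ ∈ shiftClosure D (i + n) (j + n) := by
  change extClosure _ X at h
  change extClosure _ _
  induction h with
  | of X hX =>
    obtain ⟨Y, l, h₁, h₂, hY, rfl⟩ := hX
    exact extClosure_iso ((shiftFunctorAdd C l n).app Y)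
      (.of _ ⟨Y, l + n, by omega, by omega, hY, rfl⟩)
  | zero X hX => exact .zero _ ((shiftFunctor C n).map_isZero hX)
  | ext₂ T hT _ _ h₁ h₃ => exact .ext₂ _ (Triangle.shift_distinguished T hT n) h₁ h₃

lemma genSub_bounded {D : Set C} {X : C} (h : genSub D X) :
    ∃ i j : ℤ, X ∈ shiftClosure D i j := by
  induction h with
  | of X hX =>
    exact ⟨0, 0, extClosure_iso ((shiftFunctorZero C ℤ).app X)
      (.of _ ⟨X, 0, le_rfl, le_rfl, hX, rfl⟩)⟩
  | zero X hX => exact ⟨0, 0, .zero _ hX⟩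
  | shift X n _ ih =>
    obtain ⟨i, j, h⟩ := ih
    exact ⟨_, _, shiftClosure_shift n h⟩
  | ext₂ T hT _ _ h₁ h₃ =>
    obtain ⟨i, j, h⟩ := h₁
    obtain ⟨i', j', h'⟩ := h₃
    exact ⟨min i i', max j j', .ext₂ T hT
      (shiftClosure_mono (min_le_left _ _) (le_max_left _ _) h)
      (shiftClosure_mono (min_le_right _ _) (le_max_right _ _) h')⟩

lemma shiftClosure_genSub {D : Set C} {i j : ℤ} {X : C} (h : X ∈ shiftClosure D i j) :
    genSub D X := by
  change extClosure _ X at h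
  induction h with
  | of X hX =>
    obtain ⟨Y, l, h₁, h₂, hY, rfl⟩ := hX
    exact .shift _ _ (.of _ hY)
  | zero X hX => exact .zero _ hX
  | ext₂ T hT _ _ h₁ h₃ => exact .ext₂ T hT h₁ h₃

lemma shiftClosure_hom_zero {D : Set C} (hD : WeaklyNegative D) {i j k l : ℤ} (hjk : j < k)
    {X Y : C} (hX : X ∈ shiftClosure D i j) (hY : Y ∈ shiftClosure D k l)
    (f : X ⟶ Y⟦(1 : ℤ)⟧) : f = 0 := by
  change extClosure _ X at hX
  change extClosure _ Y at hY
  induction hX with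
  | zero X hX => exact hX.eq_of_src _ _
  | ext₂ T hT _ _ h₁ h₃ =>
    obtain ⟨g, rfl⟩ := Triangle.yoneda_exact₂ T hT f (h₁ _)
    rw [h₃ g, comp_zero]
  | of X hX =>
    obtain ⟨A, m, h₁, h₂, hA, rfl⟩ := hX
    induction hY with
    | zero Y hY => exact ((shiftFunctor C (1 : ℤ)).map_isZero hY).eq_of_tgt _ _
    | ext₂ T hT _ _ h₁ h₃ =>
      obtain ⟨g, rfl⟩ := Triangle.coyoneda_exact₂ _ (Triangle.shift_distinguished T hT 1) f (h₃ _)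
      have hg : g = 0 := h₁ g
      rw [hg]
      exact zero_comp
    | of Y hY =>
      obtain ⟨A', m', h₁', h₂', hA', rfl⟩ := hY
      let e : (A'⟦m'⟧)⟦(1 : ℤ)⟧ ≅ (A'⟦m' + 1 - m⟧)⟦m⟧ :=
        ((shiftFunctorAdd C m' 1).app A').symm ≪≫
          (shiftFunctorAdd' C (m' + 1 - m) m (m' + 1) (by omega)).app A'
      obtain ⟨g, hg⟩ := (shiftFunctor C m).map_surjective (f ≫ e.hom)
      rw [hD.2 A hA A' hA' _ (by omega) g, Functor.map_zero] at hg
      rw [← cancel_mono e.hom, zero_comp, ← hg]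

lemma shiftClosure_decomp [IsTriangulated C] {D : Set C} (hD : WeaklyNegative D) {i j : ℤ}
    (m : ℤ) {X : C} (hX : X ∈ shiftClosure D i j) :
    ObjectProperty.extensionProduct (C := C) (shiftClosure D i m) (shiftClosure D (m + 1) j) X := by
  let P : ObjectProperty C := shiftClosure D i m
  let Q : ObjectProperty C := shiftClosure D (m + 1) j
  change P.extensionProduct Q X
  have hP0 : P.ContainsZero := ⟨0, isZero_zero _, extClosure.zero _ (isZero_zero _)⟩
  have hQ0 : Q.ContainsZero := ⟨0, isZero_zero _, extClosure.zero _ (isZero_zero _)⟩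
  have hPP : P.extensionProduct P ≤ P := by
    rintro X ⟨A, B, f, g, h, hT, hA, hB⟩
    exact extClosure.ext₂ _ hT hA hB
  have hQQ : Q.extensionProduct Q ≤ Q := by
    rintro X ⟨A, B, f, g, h, hT, hA, hB⟩
    exact extClosure.ext₂ _ hT hA hB
  have hQP : Q.extensionProduct P ≤ P.extensionProduct Q := by
    rintro X ⟨A, B, f, g, h, hT, hA, hB⟩
    have hh : h = 0 := shiftClosure_hom_zero hD (lt_add_one m) hB hA h
    obtain ⟨e, -⟩ := exists_iso_binaryBiproduct_of_distTriang _ hT hh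
    exact ObjectProperty.prop_of_iso _ ((biprod.braiding B A) ≪≫ e.symm)
      ⟨_, _, _, _, _, binaryBiproductTriangle_distinguished B A, hB, hA⟩
  have key : (P.extensionProduct Q).extensionProduct (P.extensionProduct Q) ≤
      P.extensionProduct Q := by
    rw [ObjectProperty.extensionProduct_assoc, ← ObjectProperty.extensionProduct_assoc Q]
    refine (ObjectProperty.monotone_extensionProduct_right _
      (ObjectProperty.monotone_extensionProduct_left _ hQP)).trans ?_
    rw [ObjectProperty.extensionProduct_assoc, ← ObjectProperty.extensionProduct_assoc P P]
    exact (ObjectProperty.monotone_extensionProduct_left _ hPP).trans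
      (ObjectProperty.monotone_extensionProduct_right _ hQQ)
  change extClosure _ X at hX
  induction hX with
  | of X hX =>
    obtain ⟨A, l, h₁, h₂, hA, rfl⟩ := hX
    by_cases hl : l ≤ m
    · exact ObjectProperty.le_extensionProduct_left (P := P) (Q := Q) _
        (extClosure.of _ ⟨A, l, h₁, hl, hA, rfl⟩)
    · exact ObjectProperty.le_extensionProduct_right (P := P) (Q := Q) _
        (extClosure.of _ ⟨A, l, by omega, h₂, hA, rfl⟩)
  | zero X hX => exact ObjectProperty.le_extensionProduct_left (P := P) (Q := Q) _ (extClosure.zero _ hX)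
  | ext₂ T hT _ _ h₁ h₃ => exact key _ ⟨_, _, _, _, _, hT, h₁, h₃⟩

end Helpers

/-- Proposition: vanishing criterion for a morphism of the Verdier quotient presented
as a roof `h ∘ q⁻¹` with `Cone(q) ∈ B_{[n,0]}`: it vanishes if and only if `h` factors
in `C` through an element of `B_{[n-1,0]}`. -/
theorem statement6 {C : Type u} [Category.{v} C] [HasZeroObject C] [HasShift C ℤ]
    [Preadditive C] [∀ n : ℤ, (shiftFunctor C n).Additive] [Pretriangulated C]
    [IsTriangulated C] (B : Set C) (hB : WeaklyNegative B) (n : ℤ) (X Y : C)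
    (hX : ∀ Z' ∈ shiftClosureGE B 1, ∀ f : X ⟶ Z', f = 0)
    (hY : ∀ Z' ∈ shiftClosureLE B (n - 2), ∀ f : Z' ⟶ Y, f = 0)
    (e : (genSubcat B).trW.Q.obj X ⟶ (genSubcat B).trW.Q.obj Y)
    (Z : C) (h : Z ⟶ Y) (q : Z ⟶ X)
    (hq : ∃ (W : C) (a : X ⟶ W) (b : W ⟶ Z⟦(1 : ℤ)⟧),
      (Triangle.mk q a b ∈ distTriang C) ∧ W ∈ shiftClosure B n 0)
    (hqIso : IsIso ((genSubcat B).trW.Q.map q))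
    (he : (genSubcat B).trW.Q.map q ≫ e = (genSubcat B).trW.Q.map h) :
    e = 0 ↔ ∃ T ∈ shiftClosure B (n - 1) 0, ∃ (a : Z ⟶ T) (b : T ⟶ Y), a ≫ b = h := by
  obtain ⟨W, a, b, hT, hW⟩ := hq
  constructor
  · intro h0
    have hQ : (genSubcat B).trW.Q.map h = (genSubcat B).trW.Q.map 0 := by
      rw [← he, h0, comp_zero, Functor.map_zero]
    rw [MorphismProperty.map_eq_iff_postcomp _ (genSubcat B).trW] at hQ
    obtain ⟨Y', s, hs, hhs⟩ := hQ
    rw [zero_comp] at hhs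
    rw [ObjectProperty.trW_iff'] at hs
    obtain ⟨D, u, w, hD, hDB⟩ := hs
    obtain ⟨g, hg⟩ := Triangle.coyoneda_exact₂ _ hD h hhs
    change Z ⟶ D at g
    change h = g ≫ u at hg
    obtain ⟨i, j, hij⟩ := genSub_bounded hDB
    replace hij : D ∈ shiftClosure B (min i (n - 2)) (max j 1) :=
      shiftClosure_mono (min_le_left _ _) (le_max_left _ _) hij
    obtain ⟨L, R, l, r, d, hLR, hL, hR⟩ := shiftClosure_decomp hB 0 hij
    have hZR : ∀ f : Z ⟶ R, f = 0 := by
      intro f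
      have hbf : b ≫ f⟦(1 : ℤ)⟧' = 0 :=
        shiftClosure_hom_zero hB (by omega : (0 : ℤ) < 0 + 1) hW hR _
      obtain ⟨g', hg'⟩ := Triangle.yoneda_exact₃ _ (rot_of_distTriang _ hT) (f⟦(1 : ℤ)⟧') hbf
      change X⟦(1 : ℤ)⟧ ⟶ R⟦(1 : ℤ)⟧ at g'
      change f⟦(1 : ℤ)⟧' = (-q⟦(1 : ℤ)⟧') ≫ g' at hg'
      obtain ⟨g'', rfl⟩ := (shiftFunctor C (1 : ℤ)).map_surjective g'
      rw [hX R ⟨max j 1, le_max_right _ _, hR⟩ g''] at hg'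
      apply (shiftFunctor C (1 : ℤ)).map_injective
      rw [hg']
      simp
    obtain ⟨g₁, hg₁⟩ := Triangle.coyoneda_exact₂ _ hLR g (hZR _)
    change Z ⟶ L at g₁
    change g = g₁ ≫ l at hg₁
    obtain ⟨L', R', l', r', d', hLR', hL', hR'⟩ := shiftClosure_decomp hB (n - 2) hL
    obtain ⟨k, hk⟩ := Triangle.yoneda_exact₂ _ hLR' (l ≫ u)
      (hY L' ⟨_, min_le_right _ _, hL'⟩ _)
    change R' ⟶ Y at k
    change l ≫ u = r' ≫ k at hk
    refine ⟨R', shiftClosure_mono (by omega) le_rfl hR', g₁ ≫ r', k, ?_⟩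
    rw [Category.assoc, ← hk, hg, hg₁, Category.assoc]
  · rintro ⟨T, hTB, a', b', rfl⟩
    have hZ : (genSubcat B).trW.Q.map (𝟙 T) = (genSubcat B).trW.Q.map 0 := by
      rw [MorphismProperty.map_eq_iff_postcomp _ (genSubcat B).trW]
      refine ⟨0, 0, ?_, by simp⟩
      rw [ObjectProperty.trW_iff']
      exact ⟨T, 𝟙 T, 0, contractible_distinguished T, shiftClosure_genSub hTB⟩
    rw [← cancel_epi ((genSubcat B).trW.Q.map q), he, comp_zero, ← Category.id_comp b',
      Functor.map_comp, Functor.map_comp, hZ, Functor.map_zero, zero_comp, comp_zero]
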